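/- For any positive integer g and any partitions λ of k and λ' of k' with λ ≰ λ', there exists a finite simple graph G of girth at least g which is λ-choosable but not λ'-choosable. -/

import Mathlib

/-- `lam` is a partition of `k`: a finite multiset of positive integers summing to `k`. -/
def IsPartitionOf (lam : Multiset ℕ) (k : ℕ) : Prop :=
  (∀ a ∈ lam, 0 < a) ∧ lam.sum = k

/-- `lam'` is a refinement of `lam`: `lam'` is obtained from `lam` by replacing
some parts of `lam` by partitions of these parts. -/
def PartitionRefines (lam' lam : Multiset ℕ) : Prop :=
  ∃ M : Multiset (Multiset ℕ),
    M.map Multiset.sum = lam ∧ M.join = lam' ∧ ∀ m ∈ M, ∀ a ∈ m, 0 < a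

/-- `lam ≤ lam'`: there is a partition `lam''` obtained from `lam` by increasing
some of its parts such that `lam'` is a refinement of `lam''`. -/
def PartitionLE (lam lam' : Multiset ℕ) : Prop :=
  ∃ lam'' : Multiset ℕ, Multiset.Rel (· ≤ ·) lam lam'' ∧ PartitionRefines lam' lam''

/-- `L` is a `lam`-assignment: a `k`-assignment (`k = lam.sum`) such that the set of colours
`⋃ v, L v` can be partitioned into colour groups `C_1, …, C_q` with `|L v ∩ C_i| = k_i`
for every vertex `v` and every part `k_i` of `lam`. -/
def IsLamAssignment {V : Type*} (lam : Multiset ℕ) (L : V → Finset ℕ) : Prop :=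
  (∀ v, (L v).card = lam.sum) ∧
  ∃ (q : ℕ) (ks : Fin q → ℕ) (Cs : Fin q → Finset ℕ),
    (↑(List.ofFn ks) : Multiset ℕ) = lam ∧
    (Pairwise fun i j => Disjoint (Cs i) (Cs j)) ∧
    (∀ c : ℕ, (∃ v, c ∈ L v) ↔ ∃ i, c ∈ Cs i) ∧
    ∀ v i, ((L v) ∩ Cs i).card = ks i

/-- `G` is `lam`-choosable: `G` has a proper `L`-colouring for every `lam`-assignment `L`. -/
def LamChoosable {V : Type*} (lam : Multiset ℕ) (G : SimpleGraph V) : Prop :=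
  ∀ L : V → Finset ℕ, IsLamAssignment lam L →
    ∃ f : V → ℕ, (∀ v, f v ∈ L v) ∧ ∀ ⦃u w⦄, G.Adj u w → f u ≠ f w


def BadAt {E R V : Type} (F : Finset E) (ed : E → R → V) (e : E) (r : R) : Prop :=
  ∃ e' ∈ F, e' ≠ e ∧ ∃ r', ed e' r' = ed e r

def Sparse {E R V : Type} (g : ℕ) (ed : E → R → V) : Prop :=
  ∀ F : Finset E, F.Nonempty → F.card ≤ g →
    ∃ e ∈ F, ∀ r r', BadAt F ed e r → BadAt F ed e r' → r = r'

theorem Sparse.strong {E R V : Type} {g : ℕ} {ed : E → R → V} (h : Sparse g ed)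
    (hinj : ∀ e, Function.Injective (ed e)) :
    ∀ (n : ℕ) (F : Finset E), F.card = n → F.Nonempty → F.card ≤ g →
    ∀ p : V → Prop, (∀ u v, p u → p v → u = v) →
    ∃ e ∈ F, ∀ r r', (BadAt F ed e r ∨ p (ed e r)) → (BadAt F ed e r' ∨ p (ed e r')) → r = r' := by
  classical
  intro n
  induction n with
  | zero => intro F h0 hne; simp_all
  | succ n ih =>
    intro F hn hne hg p hp
    obtain ⟨e, he, hw⟩ := h F hne hg
    by_cases hx : ∃ r, p (ed e r) ∧ ¬ BadAt F ed e r
    · obtain ⟨x, hpx, hxb⟩ := hx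
      by_cases hF : (F.erase e).Nonempty
      · obtain ⟨e', he', hs⟩ := ih (F.erase e) (by rw [Finset.card_erase_of_mem he]; omega) hF
          (le_trans (Finset.card_le_card (Finset.erase_subset _ _)) hg)
          (fun v => ∃ r, BadAt F ed e r ∧ v = ed e r)
          (by rintro u v ⟨r, hr, rfl⟩ ⟨r', hr', rfl⟩; rw [hw r r' hr hr'])
        rw [Finset.mem_erase] at he'
        refine ⟨e', he'.2, ?_⟩
        have key : ∀ r, (BadAt F ed e' r ∨ p (ed e' r)) →
            (BadAt (F.erase e) ed e' r ∨ ∃ r0, BadAt F ed e r0 ∧ ed e' r = ed e r0) := by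
          rintro r (⟨e2, he2, hne2, r2, hr2⟩ | hpr)
          · by_cases h2 : e2 = e
            · subst h2
              exact Or.inr ⟨r2, ⟨e', he'.2, he'.1, r, hr2.symm⟩, hr2.symm⟩
            · exact Or.inl ⟨e2, Finset.mem_erase.2 ⟨h2, he2⟩, hne2, r2, hr2⟩
          · exact absurd ⟨e', he'.2, he'.1, r, hp _ _ hpr hpx⟩ hxb
        exact fun r r' hr hr' => hs r r' (key r hr) (key r' hr')
      · have hFe : ∀ e' ∈ F, e' = e := by
          intro e' he'
          by_contra hc
          exact hF ⟨e', Finset.mem_erase.2 ⟨hc, he'⟩⟩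
        refine ⟨e, he, ?_⟩
        have nb : ∀ r, ¬ BadAt F ed e r := by
          rintro r ⟨e', he', hne', _⟩; exact hne' (hFe e' he')
        intro r r' hr hr'
        have h1 := hr.resolve_left (nb r)
        have h2 := hr'.resolve_left (nb r')
        exact hinj e (hp _ _ h1 h2)
    · push Not at hx
      refine ⟨e, he, fun r r' hr hr' => hw r r' ?_ ?_⟩
      · exact hr.elim id (hx r)
      · exact hr'.elim id (hx r')

theorem pigeon (R C : Type) [Finite R] [Finite C] [Nonempty C] (κ : C × R → C) :
    ∃ f : R → C × R, Function.Injective f ∧ ∃ c, ∀ r, κ (f r) = c := by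
  classical
  have := Fintype.ofFinite R
  have := Fintype.ofFinite C
  obtain ⟨c, hc⟩ := Fintype.exists_le_card_fiber_of_mul_le_card κ (n := Fintype.card R)
    (by rw [Fintype.card_prod])
  have : Fintype.card R ≤ Fintype.card {x // κ x = c} := by
    rw [Fintype.card_subtype]; exact hc
  obtain ⟨i⟩ := Function.Embedding.nonempty_of_card_le this
  exact ⟨fun r => (i r).1, fun a b h => i.injective (Subtype.ext h), c, fun r => (i r).2⟩

theorem partite (g : ℕ) (ih : ∀ (R C : Type) [Finite R] [Finite C] [Nonempty C],
      ∃ (Y E : Type) (_ : Finite Y) (_ : Finite E) (ed : E → R → Y),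
      (∀ e, Function.Injective (ed e)) ∧ Sparse g ed ∧ ∀ χ : Y → C, ∃ e, ∃ c, ∀ r, χ (ed e r) = c)
    (R C A : Type) [Finite R] [Finite C] [Nonempty C] [Finite A] (S : Finset A) :
    ∃ (V E : Type) (_ : Finite V) (_ : Finite E) (τ : V → A) (ed : E → R → V),
      (∀ e, Function.Injective (fun r => τ (ed e r))) ∧ Sparse (g + 1) ed ∧
      ∀ χ : V → C, ∃ κ : A → C, ∀ f : R → A, Function.Injective f →
        ∃ e, ∀ r, τ (ed e r) = f r ∧ (f r ∈ S → χ (ed e r) = κ (f r)) := by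
  classical
  induction S using Finset.induction_on with
  | empty =>
    refine ⟨{f : R → A // Function.Injective f} × R, {f : R → A // Function.Injective f},
      inferInstance, inferInstance, fun v => v.1.1 v.2, fun f r => (f, r), fun f => f.2, ?_, ?_⟩
    · rintro F ⟨e, he⟩ -
      refine ⟨e, he, ?_⟩
      rintro r r' ⟨e', -, hne, r2, hr2⟩
      exact absurd (congrArg Prod.fst hr2) hne
    · intro χ
      exact ⟨fun _ => Classical.arbitrary C, fun f hf => ⟨⟨f, hf⟩, fun r => ⟨rfl, by simp⟩⟩⟩
  | insert a S ha ihS =>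
    obtain ⟨V, E, _, _, τ, ed, hτ, hsp, hcol⟩ := ihS
    obtain ⟨Y, K, _, _, h, hinj, hsph, hcolh⟩ := ih {v : V // τ v = a} C
    let ι : K → V → Y ⊕ (K × V) := fun k v =>
      if hv : τ v = a then Sum.inl (h k ⟨v, hv⟩) else Sum.inr (k, v)
    have ι_inj : ∀ k, Function.Injective (ι k) := by
      intro k v v' hvv
      simp only [ι] at hvv
      split_ifs at hvv with h1 h2 h2
      · exact congrArg Subtype.val (hinj k (Sum.inl.inj hvv))
      · exact congrArg Prod.snd (Sum.inr.inj hvv)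
    have ι_ne : ∀ k k' v v', k' ≠ k → ι k' v' = ι k v →
        ∃ (hv : τ v = a) (hv' : τ v' = a), h k' ⟨v', hv'⟩ = h k ⟨v, hv⟩ := by
      intro k k' v v' hk hvv
      simp only [ι] at hvv
      split_ifs at hvv with h1 h2 h2
      · exact ⟨h2, h1, Sum.inl.inj hvv⟩
      · exact absurd (congrArg Prod.fst (Sum.inr.inj hvv)) hk
    let τ' : Y ⊕ (K × V) → A := Sum.elim (fun _ => a) (fun x => τ x.2)
    have hττ : ∀ k v, τ' (ι k v) = τ v := by
      intro k v
      simp only [ι, τ']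
      split_ifs with h1
      · simp [h1]
      · simp
    have hinjed : ∀ e, Function.Injective (ed e) := fun e r r' hr => hτ e (by simp [hr])
    refine ⟨Y ⊕ (K × V), K × E, inferInstance, inferInstance, τ',
      fun e r => ι e.1 (ed e.2 r), ?_, ?_, ?_⟩
    · rintro ⟨k, e⟩
      simp only [hττ]
      exact hτ e
    · intro F hF hFc
      by_cases hK : (F.image Prod.fst).card ≤ g
      · obtain ⟨k, hk, hleaf⟩ := hsph (F.image Prod.fst) (hF.image _) hK
        obtain ⟨⟨k0, e0⟩, hke, rfl⟩ := Finset.mem_image.1 hk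
        set Fk : Finset E := (F.filter (fun x => x.1 = k0)).image Prod.snd with hFk
        have memFk : ∀ e, e ∈ Fk ↔ (k0, e) ∈ F := by
          intro e; simp [hFk]
        obtain ⟨e, he, hs⟩ := hsp.strong hinjed _ Fk rfl ⟨e0, (memFk e0).2 hke⟩
          (le_trans Finset.card_image_le (le_trans (Finset.card_filter_le _ _) hFc))
          (fun v => ∃ hv : τ v = a, BadAt (F.image Prod.fst) h k0 ⟨v, hv⟩)
          (by rintro u v ⟨hu, hu'⟩ ⟨hv, hv'⟩
              exact congrArg Subtype.val (hleaf _ _ hu' hv'))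
        refine ⟨(k0, e), (memFk e).1 he, ?_⟩
        have key : ∀ r, BadAt F (fun e r => ι e.1 (ed e.2 r)) (k0, e) r →
            (BadAt Fk ed e r ∨ ∃ hv : τ (ed e r) = a,
              BadAt (F.image Prod.fst) h k0 ⟨ed e r, hv⟩) := by
          rintro r ⟨⟨k', e'⟩, hmem, hne, r', hr'⟩
          by_cases hkk : k' = k0
          · subst hkk
            refine Or.inl ⟨e', (memFk e').2 hmem, fun hh => hne (by rw [hh]), r', ι_inj _ hr'⟩
          · obtain ⟨hv, hv', heq⟩ := ι_ne _ _ _ _ hkk hr'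
            exact Or.inr ⟨hv, k', Finset.mem_image_of_mem Prod.fst hmem, hkk, _, heq⟩
        exact fun r r' hr hr' => hs r r' (key r hr) (key r' hr')
      · have hinjF : Set.InjOn Prod.fst (F : Set (K × E)) := by
          apply Finset.card_image_iff.1
          apply le_antisymm Finset.card_image_le
          omega
        obtain ⟨⟨k, e⟩, he⟩ := hF
        refine ⟨(k, e), he, ?_⟩
        have key : ∀ r, BadAt F (fun e r => ι e.1 (ed e.2 r)) (k, e) r → τ (ed e r) = a := by
          rintro r ⟨⟨k', e'⟩, hmem, hne, r', hr'⟩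
          have hkk : k' ≠ k := fun hh => hne (hinjF hmem he hh)
          exact (ι_ne _ _ _ _ hkk hr').1
        exact fun r r' hr hr' => hτ e ((key r hr).trans (key r' hr').symm)
    · intro χ
      obtain ⟨k, c0, hc0⟩ := hcolh (fun y => χ (Sum.inl y))
      obtain ⟨κ, hκ⟩ := hcol (fun v => χ (ι k v))
      refine ⟨Function.update κ a c0, fun f hf => ?_⟩
      obtain ⟨e, he⟩ := hκ f hf
      refine ⟨(k, e), fun r => ⟨by rw [hττ]; exact (he r).1, fun hr => ?_⟩⟩
      by_cases hfa : f r = a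
      · have h1 : τ (ed e r) = a := (he r).1.trans hfa
        rw [hfa, Function.update_self]
        simp only [ι, h1, dif_pos]
        exact hc0 _
      · rw [Function.update_of_ne hfa]
        exact (he r).2 ((Finset.mem_insert.1 hr).resolve_left hfa)

theorem hyper (g : ℕ) : ∀ (R C : Type) [Finite R] [Finite C] [Nonempty C],
      ∃ (Y E : Type) (_ : Finite Y) (_ : Finite E) (ed : E → R → Y),
      (∀ e, Function.Injective (ed e)) ∧ Sparse g ed ∧
        ∀ χ : Y → C, ∃ e, ∃ c, ∀ r, χ (ed e r) = c := by
  induction g with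
  | zero =>
    intro R C _ _ _
    refine ⟨C × R, {f : R → C × R // Function.Injective f}, inferInstance, inferInstance,
      fun f => f.1, fun f => f.2, ?_, ?_⟩
    · intro F hF h0
      exact absurd (Finset.card_pos.2 hF) (by omega)
    · intro χ
      obtain ⟨f, hf, c, hc⟩ := pigeon R C χ
      exact ⟨⟨f, hf⟩, c, hc⟩
  | succ g ih =>
    intro R C _ _ _
    classical
    have := Fintype.ofFinite R
    have := Fintype.ofFinite C
    obtain ⟨V, E, hV, hE, τ, ed, hτ, hsp, hcol⟩ := partite g ih R C (C × R) Finset.univ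
    refine ⟨V, E, hV, hE, ed, fun e r r' hr => hτ e (by simp [hr]), hsp, fun χ => ?_⟩
    obtain ⟨κ, hκ⟩ := hcol χ
    obtain ⟨f, hf, c, hc⟩ := pigeon R C κ
    obtain ⟨e, he⟩ := hκ f hf
    exact ⟨e, c, fun r => ((he r).2 (Finset.mem_univ _)).trans (hc r)⟩

theorem inj_of_loopless {E V : Type} {ed : E → Bool → V}
    (h : ∀ d, ed d false ≠ ed d true) (d : E) : Function.Injective (ed d) := by
  intro a b hab
  have := h d
  cases a <;> cases b <;> simp_all

theorem tutte_sparse {V E Y K : Type} {g : ℕ} {ed : E → Bool → V} {h : K → V → Y}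
    (hl : ∀ d, ed d false ≠ ed d true) (hinj : ∀ e, Function.Injective (h e))
    (hed : Sparse g ed) (hh : Sparse g h) :
    Sparse (V := Y ⊕ (K × V)) g (Sum.elim (fun (x : K × E) (b : Bool) => Sum.inr (x.1, ed x.2 b))
      (fun (x : K × V) (b : Bool) => if b then Sum.inl (h x.1 x.2) else Sum.inr (x.1, x.2))) := by
  classical
  intro F hF hFc
  let pr : (K × E) ⊕ (K × V) → K := Sum.elim Prod.fst Prod.fst
  obtain ⟨k, hk, hleaf⟩ := hh (F.image pr) (hF.image _) (le_trans Finset.card_image_le hFc)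
  have hmemK : ∀ x ∈ F, pr x ∈ F.image pr := fun x hx => Finset.mem_image_of_mem pr hx
  by_cases h1 : ∃ v, Sum.inr (k, v) ∈ F ∧ ¬ BadAt (F.image pr) h k v
  · obtain ⟨v, hv, hnb⟩ := h1
    refine ⟨_, hv, ?_⟩
    have key : ∀ r, BadAt F (Sum.elim (fun (x : K × E) (b : Bool) => Sum.inr (x.1, ed x.2 b))
      (fun (x : K × V) (b : Bool) => if b then Sum.inl (h x.1 x.2) else Sum.inr (x.1, x.2)))
        (Sum.inr (k, v)) r → r = false := by
      rintro (_ | _)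
      · simp
      rintro ⟨x, hx, hne, r', hr'⟩
      exfalso
      rcases x with ⟨k', e'⟩ | ⟨k', v'⟩
      · simp at hr'
      · cases r'
        · simp at hr'
        · simp only [Sum.elim_inr, if_true] at hr'
          have hr2 := Sum.inl.inj hr'
          by_cases hkk : k' = k
          · subst hkk
            exact hne (by rw [hinj _ hr2])
          · exact hnb ⟨k', hmemK _ hx, hkk, v', hr2⟩
    exact fun r r' hr hr' => (key r hr).trans (key r' hr').symm
  · push Not at h1
    set Fk : Finset E := F.toLeft.filter (fun x => x.1 = k) |>.image Prod.snd with hFk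
    have memFk : ∀ e, e ∈ Fk ↔ Sum.inl (k, e) ∈ F := by intro e; simp [hFk]
    by_cases hne : Fk.Nonempty
    · obtain ⟨e, he, hs⟩ := hed.strong (inj_of_loopless hl) _ Fk rfl hne
        (le_trans Finset.card_image_le (le_trans (Finset.card_filter_le _ _)
          (le_trans (Finset.card_toLeft_le) hFc)))
        (fun v => BadAt (F.image pr) h k v) (fun u v hu hv => hleaf u v hu hv)
      refine ⟨Sum.inl (k, e), (memFk e).1 he, ?_⟩
      have key : ∀ r, BadAt F (Sum.elim (fun (x : K × E) (b : Bool) => Sum.inr (x.1, ed x.2 b))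
        (fun (x : K × V) (b : Bool) => if b then Sum.inl (h x.1 x.2) else Sum.inr (x.1, x.2)))
          (Sum.inl (k, e)) r → (BadAt Fk ed e r ∨ BadAt (F.image pr) h k (ed e r)) := by
        rintro r ⟨x, hx, hne, r', hr'⟩
        rcases x with ⟨k', e'⟩ | ⟨k', v'⟩
        · simp only [Sum.elim_inl, Sum.inr.injEq, Prod.mk.injEq] at hr'
          obtain ⟨rfl, hr2⟩ := hr'
          exact Or.inl ⟨e', (memFk e').2 hx, fun hh => hne (by rw [hh]), r', hr2⟩
        · cases r'
          · simp at hr'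
            obtain ⟨rfl, rfl⟩ := hr'
            exact Or.inr (h1 _ hx)
          · simp at hr'
      exact fun r r' hr hr' => hs r r' (key r hr) (key r' hr')
    · obtain ⟨x, hx, hxk⟩ := Finset.mem_image.1 hk
      rcases x with ⟨k', e'⟩ | ⟨k', v⟩
      · exfalso
        simp only [pr, Sum.elim_inl] at hxk
        subst hxk
        exact hne ⟨e', (memFk e').2 hx⟩
      · simp only [pr, Sum.elim_inr] at hxk
        subst hxk
        refine ⟨_, hx, ?_⟩
        have key : ∀ r, BadAt F (Sum.elim (fun (x : K × E) (b : Bool) => Sum.inr (x.1, ed x.2 b))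
          (fun (x : K × V) (b : Bool) => if b then Sum.inl (h x.1 x.2) else Sum.inr (x.1, x.2)))
            (Sum.inr (k', v)) r → r = true := by
          rintro (_ | _)
          swap
          · simp
          rintro ⟨x, hx2, hne2, r', hr'⟩
          exfalso
          rcases x with ⟨k2, e'⟩ | ⟨k2, v'⟩
          · simp at hr'
            obtain ⟨rfl, hr2⟩ := hr'
            exact hne ⟨e', (memFk e').2 hx2⟩
          · cases r'
            · simp at hr'
              obtain ⟨rfl, rfl⟩ := hr'
              exact hne2 rfl
            · simp at hr'
        exact fun r r' hr hr' => (key r hr).trans (key r' hr').symm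

theorem tutte (g k : ℕ) : ∃ (V E : Type) (_ : Finite V) (_ : Finite E) (ed : E → Bool → V),
    Sparse g ed ∧ (∀ d, ed d false ≠ ed d true) ∧
    (∀ L : V → Finset ℕ, (∀ v, k + 1 ≤ (L v).card) →
      ∃ f : V → ℕ, (∀ v, f v ∈ L v) ∧ ∀ d, f (ed d false) ≠ f (ed d true)) ∧
    ∀ (S : Finset ℕ) (f : V → ℕ), S.card ≤ k → (∀ v, f v ∈ S) →
      ∃ d, f (ed d false) = f (ed d true) := by
  classical
  induction k with
  | zero =>
    refine ⟨Unit, Empty, inferInstance, inferInstance, fun e => e.elim, ?_, fun d => d.elim, ?_, ?_⟩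
    · rintro F ⟨e, _⟩; exact e.elim
    · intro L hL
      have : ∀ v, ∃ c, c ∈ L v := fun v => Finset.card_pos.1 (by have := hL v; omega)
      choose f hf using this
      exact ⟨f, hf, fun d => d.elim⟩
    · intro S f hS hf
      have := hf ()
      simp_all
  | succ k ih =>
    obtain ⟨V, E, _, _, ed, hsp, hl, hch, hno⟩ := ih
    obtain ⟨Y, K, _, _, h, hinj, hsph, hcol⟩ := hyper g V (Fin (k + 2))
    refine ⟨Y ⊕ (K × V), (K × E) ⊕ (K × V), inferInstance, inferInstance, _,
      tutte_sparse hl hinj hsp hsph, ?_, ?_, ?_⟩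
    · rintro (⟨k, e⟩ | ⟨k, v⟩)
      · simpa using hl e
      · simp
    · intro L hL
      have : ∀ v, ∃ c, c ∈ L v := fun v => Finset.card_pos.1 (by have := hL v; omega)
      choose f0 hf0 using this
      have : ∀ κ : K, ∃ f : V → ℕ, (∀ v, f v ∈ (L (Sum.inr (κ, v))).erase (f0 (Sum.inl (h κ v)))) ∧
          ∀ d, f (ed d false) ≠ f (ed d true) := by
        intro κ
        apply hch
        intro v
        have h1 := hL (Sum.inr (κ, v))
        have h2 := Finset.pred_card_le_card_erase (s := L (Sum.inr (κ, v)))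
          (a := f0 (Sum.inl (h κ v)))
        omega
      choose f1 hf1 hp1 using this
      refine ⟨Sum.elim (fun y => f0 (Sum.inl y)) (fun x => f1 x.1 x.2), ?_, ?_⟩
      · rintro (y | ⟨κ, v⟩)
        · exact hf0 _
        · exact Finset.mem_of_mem_erase (hf1 κ v)
      · rintro (⟨κ, e⟩ | ⟨κ, v⟩)
        · simpa using hp1 κ e
        · simpa using Finset.ne_of_mem_erase (hf1 κ v)
    · intro S f hS hf
      have : Fintype.card S ≤ Fintype.card (Fin (k + 2)) := by simp; omega
      obtain ⟨i⟩ := Function.Embedding.nonempty_of_card_le this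
      obtain ⟨κ, c, hc⟩ := hcol (fun y => i ⟨f (Sum.inl y), hf _⟩)
      by_cases hV : Nonempty V
      · obtain ⟨v0⟩ := hV
        have heq : ∀ v, f (Sum.inl (h κ v)) = f (Sum.inl (h κ v0)) := by
          intro v
          have := i.injective ((hc v).trans (hc v0).symm)
          exact congrArg Subtype.val this
        by_cases hm : ∃ v, f (Sum.inr (κ, v)) = f (Sum.inl (h κ v0))
        · obtain ⟨v, hv⟩ := hm
          exact ⟨Sum.inr (κ, v), by simp [hv, heq v]⟩
        · push Not at hm
          obtain ⟨d, hd⟩ := hno (S.erase (f (Sum.inl (h κ v0)))) (fun v => f (Sum.inr (κ, v)))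
            (by rw [Finset.card_erase_of_mem (hf _)]; omega)
            (fun v => Finset.mem_erase.2 ⟨hm v, hf _⟩)
          exact ⟨Sum.inl (κ, d), by simpa using hd⟩
      · obtain ⟨d, _⟩ := hno ∅ (fun v => 0) (by simp) (fun v => absurd ⟨v⟩ hV)
        exact absurd ⟨ed d true⟩ hV

theorem sigma_sparse {B : Type} {V E : B → Type} {g : ℕ} {ed : ∀ b, E b → Bool → V b}
    (h : ∀ b, Sparse g (ed b)) :
    Sparse (V := Σ b, V b) g (fun (x : Σ b, E b) r => ⟨x.1, ed x.1 x.2 r⟩) := by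
  classical
  rintro F ⟨⟨b, e0⟩, he0⟩ hFc
  set Fb : Finset (E b) := F.preimage (Sigma.mk b) (sigma_mk_injective.injOn) with hFb
  obtain ⟨e, he, hs⟩ := h b Fb ⟨e0, by simpa [hFb] using he0⟩
    (le_trans (Finset.card_le_card_of_injOn (Sigma.mk b) (fun x hx => by simpa [hFb] using hx)
      (sigma_mk_injective.injOn)) hFc)
  refine ⟨⟨b, e⟩, by simpa [hFb] using he, ?_⟩
  have key : ∀ r, BadAt F (fun (x : Σ b, E b) r => (⟨x.1, ed x.1 x.2 r⟩ : Σ b, V b)) ⟨b, e⟩ r →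
      BadAt Fb (ed b) e r := by
    rintro r ⟨⟨b', e'⟩, hm, hne, r', hr'⟩
    have hb : b' = b := congrArg Sigma.fst hr'
    subst hb
    refine ⟨e', by simpa [hFb] using hm, fun hh => hne (by rw [hh]), r', ?_⟩
    exact sigma_mk_injective hr'
  exact fun r r' hr hr' => hs r r' (key r hr) (key r' hr')

theorem sum_sparse {V E V' E' : Type} {g : ℕ} {ed : E → Bool → V} {ed' : E' → Bool → V'}
    (h : Sparse g ed) (h' : Sparse g ed') :
    Sparse (V := V ⊕ V') g (Sum.elim (fun e r => Sum.inl (ed e r)) (fun e r => Sum.inr (ed' e r))) := by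
  classical
  rintro F hF hFc
  by_cases hL : F.toLeft.Nonempty
  · obtain ⟨e, he, hs⟩ := h _ hL (le_trans Finset.card_toLeft_le hFc)
    refine ⟨Sum.inl e, by simpa using he, ?_⟩
    have key : ∀ r, BadAt F (Sum.elim (fun e r => (Sum.inl (ed e r) : V ⊕ V'))
        (fun e r => Sum.inr (ed' e r))) (Sum.inl e) r → BadAt F.toLeft ed e r := by
      rintro r ⟨(e' | e'), hm, hne, r', hr'⟩
      · exact ⟨e', by simpa using hm, fun hh => hne (by rw [hh]), r', Sum.inl.inj hr'⟩
      · simp at hr'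
    exact fun r r' hr hr' => hs r r' (key r hr) (key r' hr')
  · have hR : F.toRight.Nonempty := by
      obtain ⟨(e | e), he⟩ := hF
      · exact absurd ⟨e, by simpa using he⟩ hL
      · exact ⟨e, by simpa using he⟩
    obtain ⟨e, he, hs⟩ := h' _ hR (le_trans Finset.card_toRight_le hFc)
    refine ⟨Sum.inr e, by simpa using he, ?_⟩
    have key : ∀ r, BadAt F (Sum.elim (fun e r => (Sum.inl (ed e r) : V ⊕ V'))
        (fun e r => Sum.inr (ed' e r))) (Sum.inr e) r → BadAt F.toRight ed' e r := by
      rintro r ⟨(e' | e'), hm, hne, r', hr'⟩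
      · simp at hr'
      · exact ⟨e', by simpa using hm, fun hh => hne (by rw [hh]), r', Sum.inr.inj hr'⟩
    exact fun r r' hr hr' => hs r r' (key r hr) (key r' hr')

def crossEd {W D M Y K : Type} (ed : D → Bool → W) (s : M → Bool → W)
    (h : K → Option (M × Bool) → Y) : (Y × D) ⊕ (K × M) → Bool → Y × W :=
  Sum.elim (fun x b => (x.1, ed x.2 b)) (fun x b => (h x.1 (some (x.2, b)), s x.2 b))

theorem cross_sparse {W D M Y K : Type} {g : ℕ} {ed : D → Bool → W} {s : M → Bool → W}
    {h : K → Option (M × Bool) → Y} (hl : ∀ d, ed d false ≠ ed d true)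
    (hinj : ∀ e, Function.Injective (h e)) (hed : Sparse g ed) (hh : Sparse g h) :
    Sparse g (crossEd ed s h) := by
  classical
  intro F hF hFc
  let Fy : Y → Finset D := fun y => (F.toLeft.filter (fun x => x.1 = y)).image Prod.snd
  have memFy : ∀ y d, d ∈ Fy y ↔ Sum.inl (y, d) ∈ F := by intro y d; simp [Fy]
  have cardFy : ∀ y, (Fy y).card ≤ g := fun y => le_trans Finset.card_image_le
    (le_trans (Finset.card_filter_le _ _) (le_trans (Finset.card_toLeft_le) hFc))
  by_cases hR : F.toRight.Nonempty
  · obtain ⟨k, hk, hleaf⟩ := hh (F.toRight.image Prod.fst) (hR.image _)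
      (le_trans Finset.card_image_le (le_trans Finset.card_toRight_le hFc))
    obtain ⟨⟨k0, m⟩, hkm, rfl⟩ := Finset.mem_image.1 hk
    have hkm' : Sum.inr (k0, m) ∈ F := by simpa using hkm
    have : ∃ b, ¬ BadAt (F.toRight.image Prod.fst) h k0 (some (m, b)) := by
      by_contra hc
      push Not at hc
      have := hleaf _ _ (hc true) (hc false)
      simp at this
    obtain ⟨b, hb⟩ := this
    -- cross edges meeting the fibre
    have uniq : ∀ k' m' b', Sum.inr (k', m') ∈ F →
        h k' (some (m', b')) = h k0 (some (m, b)) → k' = k0 ∧ m' = m ∧ b' = b := by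
      intro k' m' b' hm' heq
      by_cases hkk : k' = k0
      · subst hkk
        have := hinj _ heq
        simp at this
        exact ⟨rfl, this⟩
      · exact absurd ⟨k', Finset.mem_image.2 ⟨(k', m'), by simpa using hm', rfl⟩, hkk, _, heq⟩ hb
    set y := h k0 (some (m, b)) with hy
    by_cases hne : (Fy y).Nonempty
    · obtain ⟨e, he, hs⟩ := hed.strong (inj_of_loopless hl) _ (Fy y) rfl hne (cardFy y)
        (fun w => w = s m b) (fun u v hu hv => hu.trans hv.symm)
      refine ⟨Sum.inl (y, e), (memFy y e).1 he, ?_⟩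
      have key : ∀ r, BadAt F (crossEd ed s h) (Sum.inl (y, e)) r →
          (BadAt (Fy y) ed e r ∨ ed e r = s m b) := by
        rintro r ⟨(⟨y', e'⟩ | ⟨k', m'⟩), hx, hne, r', hr'⟩
        · simp only [crossEd, Sum.elim_inl, Prod.mk.injEq] at hr'
          obtain ⟨rfl, hr2⟩ := hr'
          exact Or.inl ⟨e', (memFy _ _).2 hx, fun hh => hne (by rw [hh]), r', hr2⟩
        · simp only [crossEd, Sum.elim_inl, Sum.elim_inr, Prod.mk.injEq] at hr'
          obtain ⟨rfl, rfl, rfl⟩ := uniq _ _ _ hx hr'.1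
          exact Or.inr hr'.2.symm
      exact fun r r' hr hr' => hs r r' (key r hr) (key r' hr')
    · refine ⟨_, hkm', ?_⟩
      have key : ∀ r, BadAt F (crossEd ed s h) (Sum.inr (k0, m)) r → r ≠ b := by
        rintro r ⟨(⟨y', e'⟩ | ⟨k', m'⟩), hx, hne2, r', hr'⟩ rfl
        · simp only [crossEd, Sum.elim_inl, Sum.elim_inr, Prod.mk.injEq] at hr'
          obtain ⟨rfl, hr2⟩ := hr'
          exact hne ⟨e', (memFy _ _).2 hx⟩
        · simp only [crossEd, Sum.elim_inr, Prod.mk.injEq] at hr'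
          obtain ⟨rfl, rfl, rfl⟩ := uniq _ _ _ hx hr'.1
          exact hne2 rfl
      intro r r' hr hr'
      have h1 := key r hr
      have h2 := key r' hr'
      cases r <;> cases r' <;> cases b <;> simp_all
  · obtain ⟨x, hx⟩ := hF
    rcases x with ⟨y, d0⟩ | ⟨k, m⟩
    · obtain ⟨e, he, hs⟩ := hed (Fy y) ⟨d0, (memFy _ _).2 hx⟩ (cardFy y)
      refine ⟨Sum.inl (y, e), (memFy y e).1 he, ?_⟩
      have key : ∀ r, BadAt F (crossEd ed s h) (Sum.inl (y, e)) r → BadAt (Fy y) ed e r := by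
        rintro r ⟨(⟨y', e'⟩ | ⟨k', m'⟩), hx2, hne, r', hr'⟩
        · simp only [crossEd, Sum.elim_inl, Prod.mk.injEq] at hr'
          obtain ⟨rfl, hr2⟩ := hr'
          exact ⟨e', (memFy _ _).2 hx2, fun hh => hne (by rw [hh]), r', hr2⟩
        · exact absurd ⟨(k', m'), by simpa using hx2⟩ hR
      exact fun r r' hr hr' => hs r r' (key r hr) (key r' hr')
    · exact absurd ⟨(k, m), by simpa using hx⟩ hR

/-- The simple graph underlying an indexed multigraph. -/
def mgraph {E V : Type} (ed : E → Bool → V) : SimpleGraph V :=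
  SimpleGraph.fromRel (fun u w => ∃ e, ed e false = u ∧ ed e true = w)

theorem mgraph_adj {E V : Type} {ed : E → Bool → V} (hl : ∀ d, ed d false ≠ ed d true) (d : E) :
    (mgraph ed).Adj (ed d false) (ed d true) := by
  rw [mgraph, SimpleGraph.fromRel_adj]
  exact ⟨hl d, Or.inl ⟨d, rfl, rfl⟩⟩

theorem mgraph_exists {E V : Type} {ed : E → Bool → V} {u w : V} (h : (mgraph ed).Adj u w) :
    ∃ d, s(ed d false, ed d true) = s(u, w) := by
  rw [mgraph, SimpleGraph.fromRel_adj] at h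
  obtain ⟨-, ⟨d, rfl, rfl⟩ | ⟨d, rfl, rfl⟩⟩ := h
  · exact ⟨d, rfl⟩
  · exact ⟨d, Sym2.eq_swap⟩

theorem mgraph_proper {E V : Type} {ed : E → Bool → V} {f : V → ℕ}
    (h : ∀ d, f (ed d false) ≠ f (ed d true)) ⦃u w : V⦄ (huw : (mgraph ed).Adj u w) :
    f u ≠ f w := by
  rw [mgraph, SimpleGraph.fromRel_adj] at huw
  obtain ⟨-, ⟨d, rfl, rfl⟩ | ⟨d, rfl, rfl⟩⟩ := huw
  · exact h d
  · exact (h d).symm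

theorem mgraph_egirth {E V : Type} {g : ℕ} {ed : E → Bool → V} (hsp : Sparse g ed) :
    (g : ℕ∞) ≤ (mgraph ed).egirth := by
  classical
  rw [SimpleGraph.le_egirth]
  intro a w hw
  by_contra hlt
  have hlt : w.length < g := by
    have := not_le.1 hlt
    exact_mod_cast this
  have hex : ∀ x : {x // x ∈ w.edges.toFinset}, ∃ d, s(ed d false, ed d true) = x.1 := by
    rintro ⟨x, hx⟩
    have hx' := w.edges_subset_edgeSet (List.mem_toFinset.1 hx)
    induction x using Sym2.ind with
    | _ u v => exact mgraph_exists hx'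
  choose idx hidx using hex
  set F : Finset E := w.edges.toFinset.attach.image idx with hF
  have hFc : F.card ≤ g := by
    refine le_trans Finset.card_image_le ?_
    rw [Finset.card_attach]
    refine le_trans (List.toFinset_card_le _) ?_
    rw [SimpleGraph.Walk.length_edges]
    exact hlt.le
  have hdeg : ∀ v ∈ w.support, ∃ u1 u2, u1 ≠ u2 ∧ s(v, u1) ∈ w.edges ∧ s(v, u2) ∈ w.edges := by
    intro v hv
    have := hw.ncard_neighborSet_toSubgraph_eq_two hv
    obtain ⟨u1, u2, hne, heq⟩ := Set.ncard_eq_two.1 this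
    have h1 : u1 ∈ w.toSubgraph.neighborSet v := by rw [heq]; simp
    have h2 : u2 ∈ w.toSubgraph.neighborSet v := by rw [heq]; simp
    refine ⟨u1, u2, hne, ?_, ?_⟩
    · rw [← SimpleGraph.Walk.mem_edges_toSubgraph]; exact h1
    · rw [← SimpleGraph.Walk.mem_edges_toSubgraph]; exact h2
  have hFne : F.Nonempty := by
    obtain ⟨u1, _, _, h1, _⟩ := hdeg a w.start_mem_support
    exact ⟨_, Finset.mem_image.2 ⟨⟨_, List.mem_toFinset.2 h1⟩, Finset.mem_attach _ _, rfl⟩⟩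
  obtain ⟨e, he, hs⟩ := hsp F hFne hFc
  have allbad : ∀ r, BadAt F ed e r := by
    intro r
    obtain ⟨x, -, rfl⟩ := Finset.mem_image.1 he
    have hx := hidx x
    have hxm := List.mem_toFinset.1 x.2
    have hv : ed (idx x) r ∈ w.support := by
      rw [← hx] at hxm
      cases r
      · exact w.fst_mem_support_of_mem_edges hxm
      · exact w.snd_mem_support_of_mem_edges hxm
    obtain ⟨u1, u2, hne, h1, h2⟩ := hdeg _ hv
    have main : ∀ u, (hu : s(ed (idx x) r, u) ∈ w.edges) →
        idx ⟨_, List.mem_toFinset.2 hu⟩ ≠ idx x → BadAt F ed (idx x) r := by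
      intro u hu hne
      refine ⟨idx ⟨_, List.mem_toFinset.2 hu⟩, Finset.mem_image_of_mem _ (Finset.mem_attach _ _),
        hne, ?_⟩
      have := hidx ⟨_, List.mem_toFinset.2 hu⟩
      simp only [Sym2.eq_iff] at this
      rcases this with h | h
      · exact ⟨false, h.1⟩
      · exact ⟨true, h.2⟩
    by_cases hi : idx ⟨_, List.mem_toFinset.2 h1⟩ = idx x
    · apply main u2 h2
      intro hi2
      have e1 := hidx ⟨_, List.mem_toFinset.2 h1⟩
      have e2 := hidx ⟨_, List.mem_toFinset.2 h2⟩
      rw [hi] at e1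
      rw [hi2] at e2
      have := e1.symm.trans e2
      simp only [Sym2.eq_iff] at this
      rcases this with h | h
      · exact hne h.2
      · exact hne (h.2.trans h.1)
    · exact main u1 h1 hi
  have := hs false true (allbad _) (allbad _)
  simp at this

/-- Edges of the cycle. -/
def cycEd (n : ℕ) : Fin (n + 2) → Bool → Fin (n + 2) := fun i b => if b then i + 1 else i

theorem cyc_loopless (n : ℕ) (d : Fin (n + 2)) : cycEd n d false ≠ cycEd n d true := by
  simp [cycEd]

open scoped Fin.NatCast Fin.CommRing in
theorem cyc_sparse (g n : ℕ) (hn : g < n + 2) : Sparse g (cycEd n) := by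
  classical
  rintro F ⟨i0, hi0⟩ hFc
  have : ∃ i ∈ F, i + 1 ∉ F := by
    by_contra hc
    push Not at hc
    have hall : ∀ t : ℕ, i0 + (t : Fin (n + 2)) ∈ F := by
      intro t
      induction t with
      | zero => simpa using hi0
      | succ t ih => have := hc _ ih; push_cast; rwa [add_assoc] at this
    have hu : F = Finset.univ := by
      ext j
      simp only [Finset.mem_univ, iff_true]
      have := hall (j - i0).val
      simpa using this
    rw [hu] at hFc
    simp at hFc
    omega
  obtain ⟨i, hi, hi1⟩ := this
  refine ⟨i, hi, ?_⟩
  have key : ∀ r, BadAt F (cycEd n) i r → r = false := by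
    rintro (_ | _)
    · simp
    rintro ⟨e', he', hne, r', hr'⟩
    cases r'
    · simp [cycEd] at hr'
      subst hr'
      exact absurd he' hi1
    · simp [cycEd] at hr'
      exact absurd hr' hne
  exact fun r r' hr hr' => (key r hr).trans (key r' hr').symm

open scoped Fin.NatCast Fin.CommRing in
theorem cyc_choosable (n : ℕ) (hn : Even n) (L : Fin (n + 2) → Finset ℕ)
    (hL : ∀ v, 2 ≤ (L v).card) :
    ∃ f : Fin (n + 2) → ℕ, (∀ v, f v ∈ L v) ∧ ∀ d, f (cycEd n d false) ≠ f (cycEd n d true) := by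
  classical
  have hnx : ∀ v c, ∃ d ∈ L v, d ≠ c := fun v c => Finset.exists_mem_ne (hL v) c
  choose nx hnx1 hnx2 using hnx
  by_cases h : ∃ i, ∃ c ∈ L i, c ∉ L (i - 1)
  · obtain ⟨i, c, hc, hc'⟩ := h
    let s : ℕ → ℕ := fun t => Nat.rec c (fun t prev => nx (i + ((t + 1 : ℕ) : Fin (n + 2))) prev) t
    have hs0 : s 0 = c := rfl
    have hs1 : ∀ t, s (t + 1) = nx (i + ((t + 1 : ℕ) : Fin (n + 2))) (s t) := fun t => rfl
    have hsL : ∀ t : ℕ, s t ∈ L (i + (t : Fin (n + 2))) := by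
      intro t
      cases t with
      | zero => simpa [hs0] using hc
      | succ t => rw [hs1]; exact hnx1 _ _
    have hfL : ∀ v, s (v - i).val ∈ L v := by
      intro v
      have := hsL (v - i).val
      simpa using this
    refine ⟨fun v => s (v - i).val, hfL, ?_⟩
    intro v
    simp only [cycEd, if_true, Bool.false_eq_true, if_false]
    by_cases hv : v + 1 = i
    · have : v = i - 1 := by rw [← hv]; simp
      have h2 := hfL v
      rw [hv]
      simp only [sub_self, Fin.val_zero, hs0]
      intro hh
      rw [hh, this] at h2
      exact hc' h2
    · have : (v + 1 - i).val = (v - i).val + 1 := by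
        have e : v + 1 - i = (v - i) + 1 := by ring
        rw [e, Fin.val_add_one]
        rw [if_neg]
        intro hh
        apply hv
        have : (v - i) + 1 = 0 := by rw [hh]; simp
        rw [← e] at this
        exact sub_eq_zero.1 this
      rw [this, hs1]
      exact (hnx2 _ _).symm
  · push Not at h
    obtain ⟨a, ha, b, hb, hab⟩ := Finset.one_lt_card.1 (hL 0)
    have hall : ∀ t : ℕ, L 0 ⊆ L (0 - (t : Fin (n + 2))) := by
      intro t
      induction t with
      | zero => simp
      | succ t ih =>
        intro c hc
        have := h _ c (ih hc)
        push_cast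
        rwa [sub_sub] at this
    have hall' : ∀ v, L 0 ⊆ L v := by
      intro v
      have := hall (0 - v).val
      simpa using this
    refine ⟨fun v => if Even v.val then a else b, ?_, ?_⟩
    · intro v
      dsimp only
      split_ifs
      · exact hall' v ha
      · exact hall' v hb
    · intro v
      simp only [cycEd, if_true, Bool.false_eq_true, if_false]
      have : Even (v + 1).val ↔ ¬ Even v.val := by
        rw [Fin.val_add_one]
        split_ifs with hv
        · subst hv
          simp [Nat.even_add_one, hn]
        · rw [Nat.even_add_one]
      by_cases hv : Even v.val <;> simp [this, hv, hab, hab.symm]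

theorem not_acyclic_sum {V E : Type} (n : ℕ) (ed : E → Bool → V) :
    ¬ (mgraph (Sum.elim (fun e r => (Sum.inl (ed e r) : V ⊕ Fin (n + 3)))
      (fun e r => Sum.inr (cycEd (n + 1) e r)))).IsAcyclic := by
  rw [SimpleGraph.isAcyclic_iff_free_cycleGraph]
  push Not
  refine ⟨n + 3, by omega, ?_⟩
  refine ⟨⟨⟨Sum.inr, ?_⟩, Sum.inr_injective⟩⟩
  intro u v huv
  rw [SimpleGraph.cycleGraph_adj] at huv
  rw [mgraph, SimpleGraph.fromRel_adj]
  have hne : u ≠ v := by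
    rintro rfl; simp at huv
  refine ⟨fun hh => hne (Sum.inr_injective hh), ?_⟩
  rcases huv with h | h
  · right
    refine ⟨Sum.inr v, ?_, ?_⟩
    · simp [cycEd]
    · simp [cycEd, ← h]
  · left
    refine ⟨Sum.inr u, ?_, ?_⟩
    · simp [cycEd]
    · simp [cycEd, ← h]

theorem exists_ofFn (lam : Multiset ℕ) :
    ∃ (q : ℕ) (ks : Fin q → ℕ), (↑(List.ofFn ks) : Multiset ℕ) = lam := by
  induction lam using Quotient.inductionOn with
  | _ l => exact ⟨l.length, l.get, by rw [List.ofFn_get]; rfl⟩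

theorem ofFn_match {q q' : ℕ} (ks : Fin q → ℕ) (ks' : Fin q' → ℕ)
    (h : (↑(List.ofFn ks) : Multiset ℕ) = ↑(List.ofFn ks')) :
    ∃ σ : Fin q ≃ Fin q', ∀ i, ks' (σ i) = ks i := by
  classical
  rw [← Fin.univ_val_map, ← Fin.univ_val_map] at h
  have hc : ∀ a, Fintype.card {i // ks i = a} = Fintype.card {i // ks' i = a} := by
    intro a
    have := congrArg (Multiset.count a) h
    rw [Multiset.count_map, Multiset.count_map] at this
    rw [Fintype.card_subtype, Fintype.card_subtype]
    simp only [eq_comm (a := a)] at this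
    exact this
  let τ : ∀ a, {i // ks i = a} ≃ {i // ks' i = a} := fun a => Fintype.equivOfCardEq (hc a)
  refine ⟨(Equiv.sigmaFiberEquiv ks).symm.trans ((Equiv.sigmaCongrRight τ).trans
    (Equiv.sigmaFiberEquiv ks')), fun i => ?_⟩
  exact (τ (ks i) ⟨i, rfl⟩).2

theorem le_of_map {p q : ℕ} (ks : Fin q → ℕ) (k' : Fin p → ℕ) (hpos : ∀ j, 0 < k' j)
    (φ : Fin p → Fin q) (hφ : ∀ i, ks i ≤ ∑ j with φ j = i, k' j) :
    PartitionLE (↑(List.ofFn ks)) (↑(List.ofFn k')) := by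
  classical
  rw [← Fin.univ_val_map, ← Fin.univ_val_map]
  refine ⟨Finset.univ.val.map (fun i => ∑ j with φ j = i, k' j), ?_,
    Finset.univ.val.map (fun i => (Finset.univ.filter (fun j => φ j = i)).val.map k'), ?_, ?_, ?_⟩
  · rw [Multiset.rel_map]
    exact Multiset.rel_refl_of_refl_on (fun i _ => hφ i)
  · rw [Multiset.map_map]; rfl
  · have h1 : ∀ s : Finset (Fin p), s.val.map k' = ∑ j ∈ s, {k' j} := by
      intro s
      induction s using Finset.induction_on with
      | empty => simp
      | insert a s ha ih => rw [Finset.sum_insert ha, ← ih, Finset.insert_val_of_notMem ha]; simp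
    have h2 : (Finset.univ.val.map
        (fun i => (Finset.univ.filter (fun j => φ j = i)).val.map k')).join =
        ∑ i : Fin q, (Finset.univ.filter (fun j => φ j = i)).val.map k' := rfl
    rw [h2, h1]
    simp only [h1]
    exact Finset.sum_fiberwise _ _ _
  · intro m hm a ha
    simp only [Multiset.mem_map] at hm
    obtain ⟨i, -, rfl⟩ := hm
    obtain ⟨j, -, rfl⟩ := Multiset.mem_map.1 ha
    exact hpos j

/-- Lists: families of subsets with prescribed sizes. -/
abbrev Lst {p : ℕ} (N : ℕ) (k' : Fin p → ℕ) : Type :=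
  {l : Fin p → Finset (Fin N) // ∀ j, (l j).card = k' j}

def colList {p N : ℕ} {k' : Fin p → ℕ} (l : Lst N k') : Finset ℕ :=
  Finset.univ.biUnion (fun j => (l.1 j).image (fun a => Nat.pair j.val a.val))

theorem mem_colList {p N : ℕ} {k' : Fin p → ℕ} (l : Lst N k') (c : ℕ) :
    c ∈ colList l ↔ ∃ j, ∃ a ∈ l.1 j, Nat.pair j.val a.val = c := by
  simp [colList]

theorem colList_group {p N : ℕ} {k' : Fin p → ℕ} (l : Lst N k') (j : Fin p) :
    ((colList l).filter (fun c => c.unpair.1 = j.val)).card = k' j := by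
  rw [← l.2 j]
  have : (colList l).filter (fun c => c.unpair.1 = j.val) =
      (l.1 j).image (fun a => Nat.pair j.val a.val) := by
    ext c
    simp only [Finset.mem_filter, mem_colList, Finset.mem_image]
    constructor
    · rintro ⟨⟨j', a, ha, rfl⟩, h⟩
      rw [Nat.unpair_pair] at h
      have : j' = j := Fin.ext h
      subst this
      exact ⟨a, ha, rfl⟩
    · rintro ⟨a, ha, rfl⟩
      exact ⟨⟨j, a, ha, rfl⟩, by rw [Nat.unpair_pair]⟩
  rw [this, Finset.card_image_of_injective]
  intro a b hab
  exact Fin.ext (Nat.pair_eq_pair.1 hab).2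

theorem colList_lam {p N : ℕ} {k' : Fin p → ℕ} {V : Type} [Finite V] (l : V → Lst N k') :
    IsLamAssignment (↑(List.ofFn k')) (fun v => colList (l v)) := by
  classical
  have := Fintype.ofFinite V
  have hgrp : ∀ v, ∀ c ∈ colList (l v), ∃ j : Fin p, c.unpair.1 = j.val := by
    intro v c hc
    obtain ⟨j, a, _, rfl⟩ := (mem_colList _ _).1 hc
    exact ⟨j, by rw [Nat.unpair_pair]⟩
  refine ⟨?_, p, k', fun j => (Finset.univ.biUnion (fun v => colList (l v))).filter
    (fun c => c.unpair.1 = j.val), rfl, ?_, ?_, ?_⟩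
  · intro v
    have hu : colList (l v) = Finset.univ.biUnion
        (fun j : Fin p => (colList (l v)).filter (fun c => c.unpair.1 = j.val)) := by
      ext c
      simp only [Finset.mem_biUnion, Finset.mem_univ, true_and, Finset.mem_filter]
      constructor
      · intro hc
        obtain ⟨j, hj⟩ := hgrp v c hc
        exact ⟨j, hc, hj⟩
      · rintro ⟨j, hc, _⟩
        exact hc
    dsimp only
    rw [hu, Finset.card_biUnion]
    · simp only [colList_group]
      rw [Multiset.sum_coe, List.sum_ofFn]
    · intro i _ j _ hij
      simp only [Function.onFun]
      rw [Finset.disjoint_left]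
      intro c hc hc'
      exact hij (Fin.ext ((Finset.mem_filter.1 hc).2.symm.trans (Finset.mem_filter.1 hc').2))
  · intro i j hij
    rw [Finset.disjoint_left]
    intro c hc hc'
    exact hij (Fin.ext ((Finset.mem_filter.1 hc).2.symm.trans (Finset.mem_filter.1 hc').2))
  · intro c
    simp only [Finset.mem_filter, Finset.mem_biUnion, Finset.mem_univ, true_and]
    constructor
    · rintro ⟨v, hv⟩
      obtain ⟨j, hj⟩ := hgrp v c hv
      exact ⟨j, ⟨v, hv⟩, hj⟩
    · rintro ⟨j, hv, _⟩
      exact hv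
  · intro v j
    rw [← colList_group (l v) j]
    congr 1
    ext c
    simp only [Finset.mem_inter, Finset.mem_filter, Finset.mem_biUnion, Finset.mem_univ, true_and]
    constructor
    · rintro ⟨h1, _, h2⟩
      exact ⟨h1, h2⟩
    · rintro ⟨h1, h2⟩
      exact ⟨h1, ⟨v, h1⟩, h2⟩

theorem dense_no {p q N : ℕ} (hq : 0 < q) (k' : Fin p → ℕ) (ks : Fin q → ℕ)
    (hN : ∀ j, 2 * k' j ≤ N)
    (hφ : ∀ φ : Fin p → Fin q, ∃ i, ∑ j with φ j = i, k' j < ks i)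
    (V E : Fin q → Type) (ed : ∀ i, E i → Bool → V i)
    (hno : ∀ i (S : Finset ℕ) (f : V i → ℕ), S.card ≤ ks i - 1 → (∀ v, f v ∈ S) →
      ∃ d, f (ed i d false) = f (ed i d true))
    (P : ∀ i, Lst N k' → V i → ℕ) (hP : ∀ i l x, P i l x ∈ colList l)
    (hin : ∀ i l d, P i l (ed i d false) ≠ P i l (ed i d true))
    (hcr : ∀ i i' l l' x x', i ≠ i' → P i l x ≠ P i' l' x') : False := by
  classical
  let S : Fin q → Fin p → Finset (Fin N) := fun i j =>
    Finset.univ.filter (fun a => ∃ l x, P i l x = Nat.pair j.val a.val)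
  have hdisj : ∀ i i' j, i ≠ i' → Disjoint (S i j) (S i' j) := by
    intro i i' j hne
    rw [Finset.disjoint_left]
    intro a ha ha'
    obtain ⟨l, x, h1⟩ := (Finset.mem_filter.1 ha).2
    obtain ⟨l', x', h2⟩ := (Finset.mem_filter.1 ha').2
    exact hcr i i' l l' x x' hne (h1.trans h2.symm)
  have hex : ∀ j, ∃ i0, ∀ i, i ≠ i0 → k' j ≤ (S i j)ᶜ.card := by
    intro j
    by_cases h : ∃ i0, (S i0 j)ᶜ.card < k' j
    · obtain ⟨i0, hi0⟩ := h
      refine ⟨i0, fun i hi => ?_⟩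
      have h1 := Finset.card_union_of_disjoint (hdisj i i0 j hi)
      have h2 := Finset.card_le_univ (S i j ∪ S i0 j)
      have h3 := hN j
      have h4 := Finset.card_add_card_compl (S i j)
      have h5 := Finset.card_add_card_compl (S i0 j)
      simp only [Fintype.card_fin] at h2 h4 h5
      omega
    · push Not at h
      exact ⟨⟨0, hq⟩, fun i _ => h i⟩
  choose φ hφ' using hex
  obtain ⟨i, hi⟩ := hφ φ
  have hl : ∀ j, ∃ A : Finset (Fin N), A.card = k' j ∧ (i ≠ φ j → A ⊆ (S i j)ᶜ) := by
    intro j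
    by_cases h : i = φ j
    · obtain ⟨A, _, hA⟩ := Finset.exists_subset_card_eq (s := (Finset.univ : Finset (Fin N)))
        (n := k' j) (by have := hN j; simp; omega)
      exact ⟨A, hA, fun hh => absurd h hh⟩
    · obtain ⟨A, hA1, hA⟩ := Finset.exists_subset_card_eq (hφ' j i h)
      exact ⟨A, hA, fun _ => hA1⟩
  choose l hlc hls using hl
  let ll : Lst N k' := ⟨l, hlc⟩
  obtain ⟨d, hd⟩ := hno i ((Finset.univ.filter (fun j => φ j = i)).biUnion
      (fun j => (l j).image (fun a => Nat.pair j.val a.val))) (P i ll) (by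
    have h1 : ((Finset.univ.filter (fun j => φ j = i)).biUnion
      (fun j => (l j).image (fun a => Nat.pair j.val a.val))).card ≤ ∑ j with φ j = i, k' j := by
      refine le_trans Finset.card_biUnion_le (Finset.sum_le_sum (fun j _ => ?_))
      exact le_trans Finset.card_image_le (hlc j).le
    omega) (by
    intro x
    obtain ⟨j, a, ha, hja⟩ := (mem_colList _ _).1 (hP i ll x)
    by_cases h : i = φ j
    · exact Finset.mem_biUnion.2 ⟨j, by simp [h], Finset.mem_image.2 ⟨a, ha, hja⟩⟩
    · exfalso
      have h1 := hls j h ha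
      rw [Finset.mem_compl] at h1
      exact h1 (Finset.mem_filter.2 ⟨Finset.mem_univ _, ll, x, hja.symm⟩))
  exact hin i ll d hd

/-- For any positive integer `g` and any partitions `lam` of `k` and `lam'` of `k'` with
`lam ≰ lam'`, there exists a finite simple graph `G` of girth at least `g` which is
`lam`-choosable but not `lam'`-choosable. -/
theorem girth_lam_choosable (g k k' : ℕ) (hg : 0 < g) (hk : 0 < k) (hk' : 0 < k')
    (lam lam' : Multiset ℕ) (hlam : IsPartitionOf lam k) (hlam' : IsPartitionOf lam' k')
    (hnle : ¬ PartitionLE lam lam') :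
    ∃ (V : Type) (_ : Fintype V) (G : SimpleGraph V),
      (g : ℕ∞) ≤ G.girth ∧ LamChoosable lam G ∧ ¬ LamChoosable lam' G := by
  classical
  obtain ⟨q, ks, hks⟩ := exists_ofFn lam
  obtain ⟨p, k's, hk's⟩ := exists_ofFn lam'
  have hkpos : ∀ i, 0 < ks i := fun i => hlam.1 _ (by
    rw [← hks, Multiset.mem_coe, List.mem_ofFn]; exact ⟨i, rfl⟩)
  have hk'pos : ∀ i, 0 < k's i := fun i => hlam'.1 _ (by
    rw [← hk's, Multiset.mem_coe, List.mem_ofFn]; exact ⟨i, rfl⟩)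
  have hksum : ∑ i, ks i = k := by
    rw [← hlam.2, ← hks, Multiset.sum_coe, List.sum_ofFn]
  have hk'sum : ∑ i, k's i = k' := by
    rw [← hlam'.2, ← hk's, Multiset.sum_coe, List.sum_ofFn]
  have hφ : ∀ φ : Fin p → Fin q, ∃ i, ∑ j with φ j = i, k's j < ks i := by
    intro φ
    by_contra hc
    push Not at hc
    apply hnle
    rw [← hks, ← hk's]
    exact le_of_map ks k's hk'pos φ hc
  have hq : 0 < q := by
    rcases Nat.eq_zero_or_pos q with h | h
    · subst h; simp at hksum; omega
    · exact h
  have hk2 : 2 ≤ k := by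
    obtain ⟨i, hi⟩ := hφ (fun _ => ⟨0, hq⟩)
    have hik : ks i ≤ k := by
      rw [← hksum]; exact Finset.single_le_sum (fun _ _ => Nat.zero_le _) (Finset.mem_univ i)
    by_contra hlt
    by_cases h0 : i = ⟨0, hq⟩
    · simp [h0] at hi
      rw [hk'sum] at hi
      rw [h0] at hik
      omega
    · have h2 : ks i + ks ⟨0, hq⟩ ≤ k := by
        rw [← hksum, ← Finset.sum_pair h0]
        exact Finset.sum_le_sum_of_subset (Finset.subset_univ _)
      have := hkpos i
      have := hkpos ⟨0, hq⟩
      omega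
  -- building blocks
  have hT := fun i => tutte g (ks i - 1)
  choose V E hVf hEf ed hsp hl hch hno using hT
  let N := 2 * k'
  have hN : ∀ j, 2 * k's j ≤ N := by
    intro j
    have : k's j ≤ k' := by
      rw [← hk'sum]; exact Finset.single_le_sum (fun _ _ => Nat.zero_le _) (Finset.mem_univ j)
    omega
  let W : Type := Σ b : Fin q × Lst N k's, V b.1
  let D : Type := Σ b : Fin q × Lst N k's, E b.1
  let edW : D → Bool → W := fun x r => ⟨x.1, ed x.1.1 x.2 r⟩
  have hspW : Sparse g edW := sigma_sparse (B := Fin q × Lst N k's)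
    (V := fun b => V b.1) (E := fun b => E b.1) (ed := fun b => ed b.1) (fun b => hsp b.1)
  have hlW : ∀ d, edW d false ≠ edW d true := by
    rintro ⟨b, e⟩ h
    exact hl b.1 e 
      (sigma_mk_injective (β := fun b : Fin q × Lst N k's => V b.1) (i := b) h)
  let M : Type := {m : W × W // m.1.1.1 ≠ m.2.1.1}
  let s : M → Bool → W := fun m b => if b then m.1.2 else m.1.1
  let cols : Finset ℕ := insert 0 (Finset.univ.biUnion (fun l : Lst N k's => colList l))
  have : Nonempty (W → {c // c ∈ cols}) := ⟨fun _ => ⟨0, Finset.mem_insert_self _ _⟩⟩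
  have hWf : Finite W := inferInstance
  have hDf : Finite D := inferInstance
  obtain ⟨Y, K, _, _, h, hinj, hsph, hcol⟩ := hyper g (Option (M × Bool)) (W → {c // c ∈ cols})
  let ed0 := crossEd edW s h
  have hsp0 : Sparse g ed0 := cross_sparse hlW hinj hspW hsph
  have hl0 : ∀ d, ed0 d false ≠ ed0 d true := by
    rintro (⟨y, d⟩ | ⟨κ, m⟩) hh
    · exact hlW d (congrArg Prod.snd hh)
    · have := congrArg Prod.snd hh
      exact m.2 (by simp [ed0, crossEd, s] at this; rw [this])
  let n := 2 * g + 1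
  let edF : ((Y × D) ⊕ (K × M)) ⊕ Fin (n + 3) → Bool → (Y × W) ⊕ Fin (n + 3) :=
    Sum.elim (fun e r => Sum.inl (ed0 e r)) (fun e r => Sum.inr (cycEd (n + 1) e r))
  have hspF : Sparse g edF := sum_sparse hsp0 (cyc_sparse g (n + 1) (by omega))
  have hlF : ∀ d, edF d false ≠ edF d true := by
    rintro (d | d) hh
    · exact hl0 d (Sum.inl_injective hh)
    · exact cyc_loopless (n + 1) d (Sum.inr_injective hh)
  refine ⟨(Y × W) ⊕ Fin (n + 3), Fintype.ofFinite _, mgraph edF, ?_, ?_, ?_⟩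
  · have h1 : ¬ (mgraph edF).IsAcyclic := not_acyclic_sum n ed0
    have h2 := mgraph_egirth hspF
    rw [SimpleGraph.girth, ENat.natCast_toNat]
    · exact h2
    · rwa [Ne, SimpleGraph.egirth_eq_top]
  · rintro L ⟨hLc, q', ks', Cs, hks', hdis, -, hLC⟩
    obtain ⟨σ, hσ⟩ := ofFn_match ks ks' (hks.trans hks'.symm)
    have hcyc := cyc_choosable (n + 1) ⟨g + 1, by omega⟩ (fun v => L (Sum.inr v)) (by
      intro v; rw [hLc, hlam.2]; exact hk2)
    obtain ⟨fc, hfc1, hfc2⟩ := hcyc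
    have hcp := fun (y : Y) (b : Fin q × Lst N k's) => hch b.1
      (fun x => L (Sum.inl (y, ⟨b, x⟩)) ∩ Cs (σ b.1)) (by
        intro x; rw [hLC, hσ]; have := hkpos b.1; omega)
    choose f hf1 hf2 using hcp
    refine ⟨Sum.elim (fun v => f v.1 v.2.1 v.2.2) fc, ?_, mgraph_proper ?_⟩
    · rintro (⟨y, ⟨b, x⟩⟩ | v)
      · exact (Finset.mem_inter.1 (hf1 y b x)).1
      · exact hfc1 v
    · rintro ((⟨y, ⟨b, e⟩⟩ | ⟨κ, ⟨⟨⟨b, x⟩, ⟨b', x'⟩⟩, hm⟩⟩) | d)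
      · exact hf2 y b e
      · have h1 := (Finset.mem_inter.1 (hf1 (h κ (some (⟨⟨⟨b, x⟩, ⟨b', x'⟩⟩, hm⟩, false))) b x)).2
        have h2 := (Finset.mem_inter.1 (hf1 (h κ (some (⟨⟨⟨b, x⟩, ⟨b', x'⟩⟩, hm⟩, true))) b' x')).2
        have h3 := hdis (fun hh => hm (σ.injective hh) : σ b.1 ≠ σ b'.1)
        intro hh
        refine Finset.disjoint_left.1 h3 h1 ?_
        have hh' : f (h κ (some (⟨⟨⟨b, x⟩, ⟨b', x'⟩⟩, hm⟩, false))) b x =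
          f (h κ (some (⟨⟨⟨b, x⟩, ⟨b', x'⟩⟩, hm⟩, true))) b' x' := hh
        rw [hh']
        exact h2
      · exact hfc2 d
  · intro hcho
    have hl0 : ∀ j, ∃ A : Finset (Fin N), A.card = k's j := by
      intro j
      obtain ⟨A, _, hA⟩ := Finset.exists_subset_card_eq (s := (Finset.univ : Finset (Fin N)))
        (n := k's j) (by have := hN j; simp; omega)
      exact ⟨A, hA⟩
    choose A hA using hl0
    let lst : (Y × W) ⊕ Fin (n + 3) → Lst N k's := Sum.elim (fun v => v.2.1.2) (fun _ => ⟨A, hA⟩)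
    have hlamL := colList_lam lst
    rw [hk's] at hlamL
    obtain ⟨f, hf, hfp⟩ := hcho _ hlamL
    have hpr : ∀ d, f (edF d false) ≠ f (edF d true) := fun d => hfp (mgraph_adj hlF d)
    have hfc : ∀ y w, f (Sum.inl (y, w)) ∈ cols := by
      intro y w
      exact Finset.mem_insert_of_mem (Finset.mem_biUnion.2 ⟨_, Finset.mem_univ _, hf (Sum.inl (y, w))⟩)
    obtain ⟨κ, c, hc⟩ := hcol (fun y w => ⟨f (Sum.inl (y, w)), hfc y w⟩)
    have hc' : ∀ r w, f (Sum.inl (h κ r, w)) = (c w).1 := by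
      intro r w
      rw [← hc r]
    refine dense_no hq k's ks hN hφ V E ed hno (fun i l x => (c ⟨(i, l), x⟩).1) ?_ ?_ ?_
    · intro i l x
      rw [← hc' none]
      exact hf (Sum.inl (h κ none, ⟨(i, l), x⟩))
    · intro i l d
      rw [← hc' none, ← hc' none]
      exact hpr (Sum.inl (Sum.inl (h κ none, ⟨(i, l), d⟩)))
    · intro i i' l l' x x' hne
      let m : M := ⟨(⟨(i, l), x⟩, ⟨(i', l'), x'⟩), hne⟩
      rw [← hc' (some (m, false)), ← hc' (some (m, true))]
      exact hpr (Sum.inl (Sum.inr (κ, m)))
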